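/- Let G=(V,p,μ) be a weighted graph with bounded geometry with constant α>0 satisfying CD(K,∞) for some K≥0. Let u₀∈L^∞(V,μ) with ‖Γu₀‖_∞ < α/2. Then there exists a unique solution u:[0,∞)→L^∞(V,μ) of the modified heat equation with initial data u₀, and this solution satisfies ‖Γ(u(t))‖_∞ ≤ e^{−2Kt}·‖Γu₀‖_∞ for all t≥0. -/

import Mathlib

/-- A weighted graph `G = (V, p, μ)`: a nonnegative kernel `p` and a positive
measure `μ` on the vertex set `V`, such that `G` is locally finite, `p` is a
Markov kernel, and `G` is connected.  Vertices `x, y` are neighbours (`x ∼ y`)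
iff `0 < p x y`. -/
structure WeightedGraph (V : Type*) where
  p : V → V → ℝ
  μ : V → ℝ
  p_nonneg : ∀ x y, 0 ≤ p x y
  μ_pos : ∀ x, 0 < μ x
  locallyFinite : ∀ x, {y | 0 < p x y}.Finite
  markov : ∀ x, HasSum (p x) 1
  connected : ∀ x y : V, ∃ n : ℕ, ∃ c : Fin (n + 1) → V,
      c 0 = x ∧ c (Fin.last n) = y ∧ ∀ i : Fin n, 0 < p (c i.castSucc) (c i.succ)

namespace WeightedGraph

variable {V : Type*} (G : WeightedGraph V)

/-- The Laplacian `Δ f (x) = ∑_{y ∼ x} p x y * (f y - f x)`.  (Summing over all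
of `V` is the same, since `p x y = 0` unless `y ∼ x`.) -/
noncomputable def lap (f : V → ℝ) (x : V) : ℝ := ∑' y, G.p x y * (f y - f x)

/-- The carré du champ `Γ f (x) = (1/2) ∑_{y ∼ x} p x y * (f y - f x)^2`. -/
noncomputable def gamma (f : V → ℝ) (x : V) : ℝ := (1 / 2) * ∑' y, G.p x y * (f y - f x) ^ 2

/-- The bilinear carré du champ
`Γ(f,g)(x) = (1/2) ∑_{y ∼ x} p x y * (f y - f x) * (g y - g x)`. -/
noncomputable def gammaBil (f g : V → ℝ) (x : V) : ℝ :=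
  (1 / 2) * ∑' y, G.p x y * (f y - f x) * (g y - g x)

/-- The iterated carré du champ `Γ₂ f = (1/2) Δ (Γ f) - Γ(f, Δ f)`. -/
noncomputable def gamma2 (f : V → ℝ) (x : V) : ℝ :=
  (1 / 2) * G.lap (G.gamma f) x - G.gammaBil f (G.lap f) x

/-- Bounded geometry with constant `α > 0`: the uniform ellipticity condition (A1)
`p x y ≥ α` whenever `x ∼ y`, and the reversibility condition (A2)
`p x y * μ x = p y x * μ y`. -/
def BoundedGeometry (α : ℝ) : Prop :=
  0 < α ∧ (∀ x y, 0 < G.p x y → α ≤ G.p x y) ∧ ∀ x y, G.p x y * G.μ x = G.p y x * G.μ y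

/-- The Bakry–Émery curvature-dimension condition `CD(K, n)`:
`Γ₂ f ≥ (1/n) (Δ f)² + K Γ f`. -/
def CD (K : ℝ) (n : ℕ) : Prop :=
  ∀ f : V → ℝ, ∀ x : V, (1 / (n : ℝ)) * G.lap f x ^ 2 + K * G.gamma f x ≤ G.gamma2 f x

/-- The Bakry–Émery curvature-dimension condition `CD(K, ∞)`: `Γ₂ f ≥ K Γ f`. -/
def CDInfty (K : ℝ) : Prop :=
  ∀ f : V → ℝ, ∀ x : V, K * G.gamma f x ≤ G.gamma2 f x

/-- The graph distance `d(x,y)`: the least length of a path of consecutive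
neighbours joining `x` to `y` (and `0` if `x = y`). -/
noncomputable def dist (x y : V) : ℕ :=
  sInf {n : ℕ | ∃ c : Fin (n + 1) → V,
    c 0 = x ∧ c (Fin.last n) = y ∧ ∀ i : Fin n, 0 < G.p (c i.castSucc) (c i.succ)}

/-- The measure `μ(B(x,r)) = ∑_{y : d(x,y) ≤ r} μ y` of the closed ball `B(x,r)`. -/
noncomputable def ballMeasure (x : V) (r : ℝ) : ℝ :=
  ∑' y : {y : V // (G.dist x y : ℝ) ≤ r}, G.μ y

end WeightedGraph

/-- The sup norm `‖f‖_∞ = sup_x |f x|` of a (bounded) function on `V`. -/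
noncomputable def supNorm {V : Type*} (f : V → ℝ) : ℝ := ⨆ x, |f x|

/-- The space `L^∞(V, μ)` of bounded functions on `V`, with the sup norm
`‖f‖_∞ = sup_x |f x|`. -/
noncomputable abbrev Linf (V : Type*) := lp (fun _ : V => ℝ) ⊤

/-- `u : [0,∞) → L^∞(V,μ)` is a solution of the modified heat equation
`∂ₜ u = Δ u + Γ u` with initial data `u₀` and derivative `u'`: `u` is continuous
on `[0,∞)`, differentiable on `(0,∞)` with derivative `u'` continuous there,
`u 0 = u₀`, and `u' t = Δ (u t) + Γ (u t)` for all `t > 0`. -/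
structure IsMHESolution {V : Type*} (G : WeightedGraph V) (u u' : ℝ → Linf V)
    (u₀ : Linf V) : Prop where
  init : u 0 = u₀
  cont : ContinuousOn u (Set.Ici 0)
  derivCont : ContinuousOn u' (Set.Ioi 0)
  hasDeriv : ∀ t > (0 : ℝ), HasDerivAt u (u' t) t
  eqn : ∀ t > (0 : ℝ), ∀ x : V, u' t x = G.lap (fun y => u t y) x + G.gamma (fun y => u t y) x

/-!
Writing `Δf + Γf = ∑_{y ∼ x} p x y ψ(f y - f x)` with `ψ s = s + s² / 2`, cutting `ψ` off outside
`[-1, 1]` makes the right-hand side a bounded Lipschitz vector field on `L^∞`, which has a global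
flow. Where `‖Γf‖ ≤ α / 2`, ellipticity bounds every increment `∇f` along an edge by `1`, so that
the cut-off is invisible there. In that region `CD(K, ∞)` and `0 ≤ 1 + ∇f` give a maximum
principle: one Euler step of length `τ` turns `‖Γf‖` into at most `(1 - 2Kτ) ‖Γf‖ + O(τ²)`. By
Grönwall's inequality `‖Γ(u t)‖` decays like `e^{-2Kt}`, so the flow never leaves the region and
solves the original equation. For uniqueness, two solutions on a compact time interval have
bounded increments, hence solve one and the same equation cut off at a higher level.
-/

open Set Filter Topology Function
open scoped NNReal ENNReal

section ODE

variable {E : Type*} [NormedAddCommGroup E]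

theorem eventually_slope_norm_lt [NormedSpace ℝ E] {w : ℝ → E} {w' : E} {t c₀ r : ℝ}
    {c : ℝ → ℝ} (hw : HasDerivWithinAt w w' (Ioi t) t) (hc : Tendsto c (𝓝[>] t) (𝓝 c₀))
    (hle : ∀ᶠ z in 𝓝[>] t, ‖w t + (z - t) • w'‖ ≤ ‖w t‖ + (z - t) * c z) (hr : c₀ < r) :
    ∀ᶠ z in 𝓝[>] t, slope (fun s ↦ ‖w s‖) t z < r := by
  have hslope : Tendsto (slope w t) (𝓝[>] t) (𝓝 w') :=
    (hasDerivWithinAt_iff_tendsto_slope' self_notMem_Ioi).1 hw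
  have hlim : Tendsto (fun z ↦ c z + ‖slope w t z - w'‖) (𝓝[>] t) (𝓝 c₀) := by
    simpa using hc.add (hslope.sub_const w').norm
  filter_upwards [hlim.eventually_lt_const hr, hle, self_mem_nhdsWithin] with z hz hlez htz
  have hpos : 0 < z - t := sub_pos.2 htz
  have hwz : w z = (w t + (z - t) • w') + (z - t) • (slope w t z - w') := by
    rw [smul_sub, sub_smul_slope, vsub_eq_sub]
    abel
  have hnorm : ‖w z‖ ≤ ‖w t‖ + (z - t) * c z + (z - t) * ‖slope w t z - w'‖ := calc
    ‖w z‖ ≤ ‖w t + (z - t) • w'‖ + ‖(z - t) • (slope w t z - w')‖ := hwz ▸ norm_add_le _ _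
    _ ≤ _ := by
      rw [norm_smul, Real.norm_of_nonneg hpos.le]
      gcongr
  rw [slope_def_field, div_lt_iff₀ hpos]
  nlinarith

/-- Grönwall's inequality in which the differential inequality is only required as long as
`φ` stays below the threshold `c`: as `φ` cannot grow, it never leaves that region. -/
theorem le_mul_exp_of_liminf_slope_right_le {φ : ℝ → ℝ} {c k T : ℝ} (hT : 0 ≤ T)
    (hφ : ContinuousOn φ (Icc 0 T)) (hk : k ≤ 0) (h0 : 0 ≤ φ 0) (hc : φ 0 < c)
    (hslope : ∀ t ∈ Ico 0 T, φ t < c → ∀ r, k * φ t < r → ∃ᶠ z in 𝓝[>] t, slope φ t z < r) :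
    φ T ≤ φ 0 * Real.exp (k * T) := by
  have gronwall (S : ℝ) (hS : S ∈ Icc 0 T) (hlt : ∀ t ∈ Ico 0 S, φ t < c) :
      φ S ≤ φ 0 * Real.exp (k * S) := by
    have := le_gronwallBound_of_liminf_deriv_right_le (f' := fun t ↦ k * φ t) (K := k) (ε := 0)
      (hφ.mono (Icc_subset_Icc_right hS.2))
      (fun t ht ↦ hslope t ⟨ht.1, ht.2.trans_le hS.2⟩ (hlt t ht)) le_rfl
      (fun t _ ↦ (add_zero _).ge) S ⟨hS.1, le_rfl⟩
    rwa [gronwallBound_ε0, sub_zero] at this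
  refine gronwall T ⟨hT, le_rfl⟩ fun t ht ↦ ?_
  by_contra! hct
  have hcompact : IsCompact (Icc 0 T ∩ φ ⁻¹' Ici c) :=
    isCompact_Icc.of_isClosed_subset
      (hφ.preimage_isClosed_of_isClosed isClosed_Icc isClosed_Ici) inter_subset_left
  obtain ⟨S, ⟨hS, hcS⟩, hleast⟩ := hcompact.exists_isLeast ⟨t, Ico_subset_Icc_self ht, hct⟩
  have hbound : φ S ≤ φ 0 * Real.exp (k * S) := gronwall S hS fun s hs ↦ by
    by_contra! hcs
    exact (hleast ⟨⟨hs.1, hs.2.le.trans hS.2⟩, hcs⟩).not_gt hs.2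
  have hexp : φ 0 * Real.exp (k * S) ≤ φ 0 :=
    mul_le_of_le_one_right h0 (Real.exp_le_one_iff.2 (mul_nonpos_of_nonpos_of_nonneg hk hS.1))
  exact (hbound.trans hexp).not_gt (hc.trans_le hcS)

variable [NormedSpace ℝ E] {F : E → E} {C : ℝ≥0}

theorem exists_forall_mem_Ioo_hasDerivAt_of_lipschitzWith [CompleteSpace E] (hF : LipschitzWith C F)
    (hb : Bornology.IsBounded (range F)) (x₀ : E) {T : ℝ} (hT : 0 ≤ T) :
    ∃ u : ℝ → E, u 0 = x₀ ∧ ∀ t ∈ Ioo (-T) T, HasDerivAt u (F (u t)) t := by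
  obtain ⟨L, hL⟩ := hb.exists_norm_le
  have hL' (x : E) : ‖F x‖ ≤ L.toNNReal :=
    (hL _ (mem_range_self x)).trans (Real.le_coe_toNNReal L)
  have hpl : IsPicardLindelof (fun _ ↦ F) (tmin := -T) (tmax := T)
      ⟨0, neg_nonpos.2 hT, hT⟩ x₀ (L.toNNReal * T.toNNReal) 0 L.toNNReal C :=
    ⟨fun _ _ ↦ hF.lipschitzOnWith, fun _ _ ↦ continuousOn_const, fun _ _ x _ ↦ hL' x,
      by simp [hT]⟩
  obtain ⟨u, hu0, hu⟩ := hpl.exists_eq_forall_mem_Icc_hasDerivWithinAt₀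
  exact ⟨u, hu0, fun t ht ↦ (hu t (Ioo_subset_Icc_self ht)).hasDerivAt (Icc_mem_nhds ht.1 ht.2)⟩

theorem exists_forall_hasDerivAt_of_lipschitzWith_of_isBounded_range [CompleteSpace E]
    (hF : LipschitzWith C F) (hb : Bornology.IsBounded (range F)) (x₀ : E) :
    ∃ u : ℝ → E, u 0 = x₀ ∧ ∀ t, HasDerivAt u (F (u t)) t := by
  choose u hu0 hu using fun n : ℕ ↦
    exists_forall_mem_Ioo_hasDerivAt_of_lipschitzWith hF hb x₀ (T := n + 1) (by positivity)
  have hagree {n m : ℕ} (hnm : n ≤ m) : EqOn (u n) (u m) (Ioo (-(n + 1 : ℝ)) (n + 1)) := by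
    have hsub : Ioo (-(n + 1 : ℝ)) (n + 1) ⊆ Ioo (-(m + 1 : ℝ)) (m + 1) := by gcongr
    exact ODE_solution_unique_of_mem_Ioo (v := fun _ ↦ F) (s := fun _ ↦ univ) (t₀ := 0)
      (fun _ _ ↦ hF.lipschitzOnWith) ⟨by linarith, by positivity⟩
      (fun t ht ↦ ⟨hu n t ht, mem_univ _⟩) (fun t ht ↦ ⟨hu m t (hsub ht), mem_univ _⟩)
      ((hu0 n).trans (hu0 m).symm)
  have hmem (s : ℝ) : s ∈ Ioo (-(⌈|s|⌉₊ + 1 : ℝ)) (⌈|s|⌉₊ + 1) :=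
    abs_lt.1 ((Nat.le_ceil |s|).trans_lt (lt_add_one _))
  refine ⟨fun t ↦ u ⌈|t|⌉₊ t, hu0 _, fun t ↦ (hu _ t (hmem t)).congr_of_eventuallyEq ?_⟩
  filter_upwards [Ioo_mem_nhds (hmem t).1 (hmem t).2] with s hs
  rcases le_total ⌈|s|⌉₊ ⌈|t|⌉₊ with h | h
  · exact hagree h (hmem s)
  · exact (hagree h hs).symm

theorem hasDerivWithinAt_Ici_of_forall_mem_Ioo {u : ℝ → E} {a b : ℝ} (hF : Continuous F)
    (hc : ContinuousOn u (Icc a b)) (hu : ∀ t ∈ Ioo a b, HasDerivAt u (F (u t)) t) :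
    ∀ t ∈ Ico a b, HasDerivWithinAt u (F (u t)) (Ici t) t := by
  intro t ht
  rcases ht.1.eq_or_lt with rfl | hat
  · have hca : ContinuousWithinAt u (Ioo a b) a :=
      (hc a (left_mem_Icc.2 ht.2.le)).mono Ioo_subset_Icc_self
    refine hasDerivWithinAt_Ici_of_tendsto_deriv
      (fun s hs ↦ (hu s hs).differentiableAt.differentiableWithinAt) hca (Ioo_mem_nhdsGT ht.2) ?_
    rw [← nhdsWithin_Ioo_eq_nhdsGT ht.2]
    refine ((hF.tendsto _).comp hca).congr' ?_
    filter_upwards [self_mem_nhdsWithin] with s hs using (hu s hs).deriv.symm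
  · exact (hu t ⟨hat, ht.2⟩).hasDerivWithinAt

theorem eqOn_Icc_of_forall_mem_Ioo_hasDerivAt {u v : ℝ → E} {a b : ℝ} (hF : LipschitzWith C F)
    (huc : ContinuousOn u (Icc a b)) (hu : ∀ t ∈ Ioo a b, HasDerivAt u (F (u t)) t)
    (hvc : ContinuousOn v (Icc a b)) (hv : ∀ t ∈ Ioo a b, HasDerivAt v (F (v t)) t)
    (ha : u a = v a) : EqOn u v (Icc a b) :=
  ODE_solution_unique_of_mem_Icc_right (v := fun _ ↦ F) (s := fun _ ↦ univ)
    (fun _ _ ↦ hF.lipschitzOnWith)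
    huc (hasDerivWithinAt_Ici_of_forall_mem_Ioo hF.continuous huc hu) (fun _ _ ↦ mem_univ _)
    hvc (hasDerivWithinAt_Ici_of_forall_mem_Ioo hF.continuous hvc hv) (fun _ _ ↦ mem_univ _) ha

end ODE

section Truncation

variable {ψ : C(ℝ, ℝ)} {R : ℝ≥0}

/-- The continuous function which agrees with `ψ` on `[-R, R]` and is constant on either side of
that interval. -/
noncomputable def truncate (R : ℝ≥0) (ψ : C(ℝ, ℝ)) : C(ℝ, ℝ) where
  toFun s := ψ (projIcc (-R : ℝ) R (neg_le_self R.2) s)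

theorem truncate_of_abs_le {s : ℝ} (hs : |s| ≤ R) : truncate R ψ s = ψ s :=
  congrArg (fun e : Icc (-R : ℝ) R ↦ ψ e) (projIcc_of_mem _ (abs_le.1 hs))

theorem lipschitzWith_truncate {C : ℝ≥0} (hψ : LipschitzOnWith C ψ (Icc (-R : ℝ) R)) :
    LipschitzWith C (truncate R ψ) := by
  have := hψ.to_restrict.comp (LipschitzWith.projIcc (neg_le_self R.2))
  rwa [mul_one] at this

theorem isBounded_range_truncate : Bornology.IsBounded (range (truncate R ψ)) :=
  (isCompact_Icc.image ψ.continuous).isBounded.subset <|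
    range_subset_iff.2 fun s ↦ mem_image_of_mem ψ (projIcc (-R : ℝ) R (neg_le_self R.2) s).2

end Truncation

namespace Linf

variable {V : Type*}

theorem abs_apply_le_norm (f : Linf V) (x : V) : |f x| ≤ ‖f‖ :=
  lp.norm_apply_le_norm ENNReal.top_ne_zero f x

/-- The superposition (Nemytskii) operator `f ↦ ψ ∘ f`. -/
noncomputable def map (ψ : C(ℝ, ℝ)) (f : Linf V) : Linf V :=
  ⟨fun x ↦ ψ (f x), by
    obtain ⟨M, hM⟩ := (isCompact_Icc (a := -‖f‖) (b := ‖f‖)).exists_bound_of_continuousOn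
      ψ.continuous.continuousOn
    exact memℓp_infty ⟨M, forall_mem_range.2 fun x ↦ hM _ (abs_le.1 (abs_apply_le_norm f x))⟩⟩

theorem lipschitzWith_map {ψ : C(ℝ, ℝ)} {C : ℝ≥0} (hψ : LipschitzWith C ψ) :
    LipschitzWith C (map ψ : Linf V → Linf V) := by
  refine LipschitzWith.of_dist_le_mul fun f g ↦ ?_
  rw [dist_eq_norm, dist_eq_norm]
  refine lp.norm_le_of_forall_le (by positivity) fun x ↦ ?_
  exact (hψ.norm_sub_le _ _).trans (by gcongr; exact abs_apply_le_norm (f - g) x)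

theorem isBounded_range_map {ψ : C(ℝ, ℝ)} (hψ : Bornology.IsBounded (range ψ)) :
    Bornology.IsBounded (range (map ψ : Linf V → Linf V)) := by
  obtain ⟨M, hM, hψM⟩ := hψ.exists_pos_norm_le
  exact isBounded_iff_forall_norm_le.2 ⟨M, forall_mem_range.2 fun f ↦
    lp.norm_le_of_forall_le hM.le fun x ↦ hψM _ (mem_range_self _)⟩

/-- The discrete gradient `(x, y) ↦ f y - f x` of `f`, over all pairs of vertices. -/
noncomputable def grad : Linf V →L[ℝ] Linf (V × V) :=
  LinearMap.mkContinuous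
    { toFun f := ⟨fun e ↦ f e.2 - f e.1, memℓp_infty ⟨‖f‖ + ‖f‖, forall_mem_range.2 fun e ↦
        norm_sub_le_of_le (abs_apply_le_norm f e.2) (abs_apply_le_norm f e.1)⟩⟩
      map_add' f g := by ext e; exact add_sub_add_comm _ _ _ _
      map_smul' c f := by ext e; exact (mul_sub c _ _).symm }
    2 fun f ↦ lp.norm_le_of_forall_le (by positivity) fun e ↦ by
      rw [two_mul]
      exact norm_sub_le_of_le (abs_apply_le_norm f e.2) (abs_apply_le_norm f e.1)

theorem abs_sub_le_norm_grad (f : Linf V) (x y : V) : |f y - f x| ≤ ‖grad f‖ :=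
  abs_apply_le_norm (grad f) (x, y)

end Linf

namespace WeightedGraph

variable {V : Type*} (G : WeightedGraph V)

section Averaging

theorem summable_p_mul (x : V) (f : V → ℝ) : Summable fun y ↦ G.p x y * f y :=
  summable_of_hasFiniteSupport <| (G.locallyFinite x).subset fun y hy ↦
    (G.p_nonneg x y).lt_of_ne' (left_ne_zero_of_mul hy)

/-- The average `∑_{y ∼ x} p x y * f y` of `f` over the neighbours of `x`, as a linear functional
of `f`. -/
noncomputable def avg (x : V) : (V → ℝ) →ₗ[ℝ] ℝ where
  toFun f := ∑' y, G.p x y * f y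
  map_add' f g := by
    simp only [Pi.add_apply, mul_add]
    exact (G.summable_p_mul x f).tsum_add (G.summable_p_mul x g)
  map_smul' c f := by
    simp only [Pi.smul_apply, smul_eq_mul, mul_left_comm, tsum_mul_left, RingHom.id_apply]

theorem avg_const (x : V) (c : ℝ) : G.avg x (fun _ ↦ c) = c := by
  change ∑' y, G.p x y * c = c
  rw [tsum_mul_right, (G.markov x).tsum_eq, one_mul]

variable {G} {x : V} {f g : V → ℝ} {c : ℝ}

theorem avg_mono (h : ∀ y, 0 < G.p x y → f y ≤ g y) : G.avg x f ≤ G.avg x g := by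
  refine (G.summable_p_mul x f).tsum_le_tsum (fun y ↦ ?_) (G.summable_p_mul x g)
  rcases (G.p_nonneg x y).eq_or_lt with h0 | hpos
  · simp [← h0]
  · exact mul_le_mul_of_nonneg_left (h y hpos) hpos.le

theorem avg_congr (h : ∀ y, 0 < G.p x y → f y = g y) : G.avg x f = G.avg x g :=
  le_antisymm (avg_mono fun y hy ↦ (h y hy).le) (avg_mono fun y hy ↦ (h y hy).ge)

theorem avg_le_of_forall_le (h : ∀ y, 0 < G.p x y → f y ≤ c) : G.avg x f ≤ c :=
  (avg_mono h).trans_eq (G.avg_const x c)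

theorem abs_avg_le_of_forall_abs_le (h : ∀ y, 0 < G.p x y → |f y| ≤ c) : |G.avg x f| ≤ c := by
  refine abs_le'.2 ⟨avg_le_of_forall_le fun y hy ↦ (le_abs_self _).trans (h y hy), ?_⟩
  rw [← map_neg]
  exact avg_le_of_forall_le fun y hy ↦ (neg_le_abs _).trans (h y hy)

end Averaging

section CarreDuChamp

variable (f g : V → ℝ) (x : V)

theorem lap_eq_avg : G.lap f x = G.avg x (fun y ↦ f y - f x) := rfl

theorem gamma_eq_avg : G.gamma f x = 1 / 2 * G.avg x (fun y ↦ (f y - f x) ^ 2) := rfl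

theorem gammaBil_eq_avg :
    G.gammaBil f g x = 1 / 2 * G.avg x (fun y ↦ (f y - f x) * (g y - g x)) := by
  simp only [gammaBil, avg, mul_assoc, LinearMap.coe_mk, AddHom.coe_mk]

theorem gamma_nonneg : 0 ≤ G.gamma f x :=
  mul_nonneg (by norm_num) (tsum_nonneg fun y ↦ mul_nonneg (G.p_nonneg x y) (sq_nonneg _))

theorem gamma_add_smul (τ : ℝ) :
    G.gamma (f + τ • g) x = G.gamma f x + 2 * τ * G.gammaBil f g x + τ ^ 2 * G.gamma g x := by
  have hexpand : (fun y ↦ ((f + τ • g) y - (f + τ • g) x) ^ 2) =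
      (fun y ↦ (f y - f x) ^ 2) + (2 * τ) • (fun y ↦ (f y - f x) * (g y - g x)) +
        τ ^ 2 • (fun y ↦ (g y - g x) ^ 2) := by
    ext y
    simp only [Pi.add_apply, Pi.smul_apply, smul_eq_mul]
    ring
  simp only [gamma_eq_avg, gammaBil_eq_avg, hexpand, map_add, map_smul, smul_eq_mul]
  ring

theorem gammaBil_add_right (h : V → ℝ) :
    G.gammaBil f (g + h) x = G.gammaBil f g x + G.gammaBil f h x := by
  simp only [gammaBil_eq_avg, ← mul_add, ← map_add]
  congr 2 with y
  simp only [Pi.add_apply]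
  ring

variable {f x} {y : V}

theorem p_mul_sq_le_two_mul_gamma : G.p x y * (f y - f x) ^ 2 ≤ 2 * G.gamma f x := by
  have hle : G.p x y * (f y - f x) ^ 2 ≤ ∑' z, G.p x z * (f z - f x) ^ 2 :=
    (G.summable_p_mul x fun z ↦ (f z - f x) ^ 2).le_tsum y
      fun z _ ↦ mul_nonneg (G.p_nonneg x z) (sq_nonneg _)
  rw [gamma]
  linarith

variable {G}

theorem abs_sub_le_one_of_two_mul_gamma_le (hxy : 0 < G.p x y) (h : 2 * G.gamma f x ≤ G.p x y) :
    |f y - f x| ≤ 1 := by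
  have hle : G.p x y * (f y - f x) ^ 2 ≤ G.p x y * 1 := by
    linarith [G.p_mul_sq_le_two_mul_gamma (f := f) (x := x) (y := y)]
  exact (sq_le_one_iff_abs_le_one _).1 (le_of_mul_le_mul_left hle hxy)

/-- `2 Γ(f, Δf + Γf) ≤ ΔΓf + 2 Γ(f, Γf) - 2K Γf`, and the first two terms combine to the average of
`(1 + ∇f) ∇Γf`, where `0 ≤ 1 + ∇f ≤ 2`. -/
theorem two_mul_gammaBil_lap_add_gamma_le {K M : ℝ} (hCD : G.CDInfty K)
    (hosc : ∀ y, 0 < G.p x y → |f y - f x| ≤ 1) (hM : ∀ y, G.gamma f y ≤ M) :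
    2 * G.gammaBil f (G.lap f + G.gamma f) x ≤ 2 * (M - G.gamma f x) - 2 * K * G.gamma f x := by
  have hsplit : G.lap (G.gamma f) x + 2 * G.gammaBil f (G.gamma f) x =
      G.avg x fun y ↦ (1 + (f y - f x)) * (G.gamma f y - G.gamma f x) := by
    rw [lap_eq_avg, gammaBil_eq_avg, ← mul_assoc, mul_one_div_cancel two_ne_zero, one_mul,
      ← map_add]
    congr 1 with y
    simp only [Pi.add_apply]
    ring
  have havg : G.avg x (fun y ↦ (1 + (f y - f x)) * (G.gamma f y - G.gamma f x)) ≤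
      2 * (M - G.gamma f x) := by
    refine avg_le_of_forall_le fun y hy ↦ ?_
    have hosc_y := abs_le.1 (hosc y hy)
    calc (1 + (f y - f x)) * (G.gamma f y - G.gamma f x)
        ≤ (1 + (f y - f x)) * (M - G.gamma f x) := by
          gcongr
          · linarith
          · exact hM y
      _ ≤ 2 * (M - G.gamma f x) := by
          gcongr
          · linarith [hM x]
          · linarith
  have hcurv := hCD f x
  rw [gamma2] at hcurv
  rw [gammaBil_add_right]
  linarith

/-- The lower bound comes from `0 ≤ Γ(f + τh) = Γf + 2τ Γ(f, h) + τ² Γh`. -/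
theorem abs_gamma_add_mul_gammaBil_le {K M N τ : ℝ} (hCD : G.CDInfty K)
    (hosc : ∀ y, 0 < G.p x y → |f y - f x| ≤ 1) (hM : ∀ y, G.gamma f y ≤ M)
    (hN : G.gamma (G.lap f + G.gamma f) x ≤ N) (hτ : 0 ≤ τ) (hτK : τ * (2 + 2 * K) ≤ 1) :
    |G.gamma f x + τ * (2 * G.gammaBil f (G.lap f + G.gamma f) x)| ≤
      (1 - 2 * K * τ) * M + τ ^ 2 * N := by
  have hM₀ : 0 ≤ M := (G.gamma_nonneg f x).trans (hM x)
  have hN₀ : 0 ≤ N := (G.gamma_nonneg _ x).trans hN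
  have hupper : G.gamma f x + τ * (2 * G.gammaBil f (G.lap f + G.gamma f) x) ≤
      (1 - 2 * K * τ) * M := calc
    _ ≤ G.gamma f x + τ * (2 * (M - G.gamma f x) - 2 * K * G.gamma f x) := by
      gcongr
      exact two_mul_gammaBil_lap_add_gamma_le hCD hosc hM
    _ = (1 - τ * (2 + 2 * K)) * G.gamma f x + 2 * τ * M := by ring
    _ ≤ (1 - τ * (2 + 2 * K)) * M + 2 * τ * M := by
      gcongr
      exact hM x
    _ = (1 - 2 * K * τ) * M := by ring
  have hlower : -(τ ^ 2 * N) ≤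
      G.gamma f x + τ * (2 * G.gammaBil f (G.lap f + G.gamma f) x) := by
    have hexpand := G.gamma_add_smul f (G.lap f + G.gamma f) x τ
    have hnonneg := G.gamma_nonneg (f + τ • (G.lap f + G.gamma f)) x
    have hquad := mul_le_mul_of_nonneg_left hN (sq_nonneg τ)
    linarith
  have hdecay : 0 ≤ (1 - 2 * K * τ) * M := mul_nonneg (by linarith) hM₀
  have hsq : 0 ≤ τ ^ 2 * N := by positivity
  exact abs_le.2 ⟨by linarith, by linarith⟩

end CarreDuChamp

section BoundedFunctions

open Linf

/-- Averaging of a bounded function on the pairs `(x, y)` over the neighbours `y` of `x`. -/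
noncomputable def avgL : Linf (V × V) →L[ℝ] Linf V :=
  LinearMap.mkContinuous
    { toFun a := ⟨fun x ↦ G.avg x fun y ↦ a (x, y), memℓp_infty ⟨‖a‖, forall_mem_range.2 fun _ ↦
        abs_avg_le_of_forall_abs_le fun _ _ ↦ abs_apply_le_norm a _⟩⟩
      map_add' a b := by ext x; exact map_add (G.avg x) _ _
      map_smul' c a := by ext x; exact map_smul (G.avg x) c _ }
    1 fun a ↦ lp.norm_le_of_forall_le (by positivity) fun x ↦ by
      rw [one_mul]
      exact abs_avg_le_of_forall_abs_le fun _ _ ↦ abs_apply_le_norm a _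

/-- The bilinear carré du champ `Γ(f, g)` of bounded functions, as a bounded function. -/
noncomputable def gammaL (f g : Linf V) : Linf V := (1 / 2 : ℝ) • G.avgL (grad f * grad g)

variable (f g : Linf V)

theorem gammaL_apply (x : V) : G.gammaL f g x = G.gammaBil f g x :=
  (G.gammaBil_eq_avg f g x).symm

theorem gammaL_self_apply (x : V) : G.gammaL f f x = G.gamma f x := by
  simp only [gammaL_apply, gammaBil_eq_avg, gamma_eq_avg, sq]

theorem supNorm_gamma : supNorm (G.gamma f) = ‖G.gammaL f f‖ :=
  congrArg supNorm (funext fun x ↦ (G.gammaL_self_apply f x).symm)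

theorem gamma_le_norm_gammaL (x : V) : G.gamma f x ≤ ‖G.gammaL f f‖ :=
  (G.gammaL_self_apply f x).symm.trans_le
    ((le_abs_self _).trans (abs_apply_le_norm (G.gammaL f f) x))

variable {G f} in
theorem abs_sub_le_one_of_norm_gammaL_le {α : ℝ} (hell : ∀ x y, 0 < G.p x y → α ≤ G.p x y)
    (hf : ‖G.gammaL f f‖ ≤ α / 2) {x y : V} (hxy : 0 < G.p x y) : |f y - f x| ≤ 1 :=
  abs_sub_le_one_of_two_mul_gamma_le hxy <| by
    linarith [G.gamma_le_norm_gammaL f x, hell x y hxy]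

variable {G} in
theorem hasDerivAt_gammaL_self {u : ℝ → Linf V} {u' : Linf V} {t : ℝ} (hu : HasDerivAt u u' t) :
    HasDerivAt (fun s ↦ G.gammaL (u s) (u s)) ((2 : ℝ) • G.gammaL (u t) u') t := by
  have hgrad := grad.hasFDerivAt.comp_hasDerivAt t hu
  have := (G.avgL.hasFDerivAt.comp_hasDerivAt t (hgrad.mul hgrad)).const_smul (1 / 2 : ℝ)
  convert! this using 1
  simp only [gammaL, Function.comp_apply, mul_comm (grad u'), ← two_smul ℝ (grad (u t) * grad u'),
    map_smul]
  rw [smul_comm]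

variable {G f g} in
theorem norm_gammaL_add_smul_le {K τ : ℝ} (hCD : G.CDInfty K)
    (hosc : ∀ x y, 0 < G.p x y → |f y - f x| ≤ 1)
    (hg : ⇑g = G.lap f + G.gamma f) (hτ : 0 ≤ τ) (hτK : τ * (2 + 2 * K) ≤ 1) :
    ‖G.gammaL f f + τ • (2 : ℝ) • G.gammaL f g‖ ≤
      ‖G.gammaL f f‖ + τ * (-2 * K * ‖G.gammaL f f‖ + τ * ‖G.gammaL g g‖) := by
  have hdecay : 0 ≤ 1 - 2 * K * τ := by linarith
  calc ‖G.gammaL f f + τ • (2 : ℝ) • G.gammaL f g‖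
      ≤ (1 - 2 * K * τ) * ‖G.gammaL f f‖ + τ ^ 2 * ‖G.gammaL g g‖ := by
        refine lp.norm_le_of_forall_le (by positivity) fun x ↦ ?_
        simp only [lp.coeFn_add, lp.coeFn_smul, Pi.add_apply, Pi.smul_apply, smul_eq_mul,
          gammaL_self_apply, gammaL_apply, hg, Real.norm_eq_abs]
        exact abs_gamma_add_mul_gammaBil_le hCD (hosc x) (G.gamma_le_norm_gammaL f)
          (hg ▸ G.gamma_le_norm_gammaL g x) hτ hτK
    _ = _ := by ring

end BoundedFunctions

section Flow

open Linf

/-- The vector field `f ↦ ∑_{y ∼ x} p x y * ψ (f y - f x)` on bounded functions. The Laplacian is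
the case `ψ s = s`. -/
noncomputable def edgeField (ψ : C(ℝ, ℝ)) (f : Linf V) : Linf V := G.avgL (map ψ (grad f))

theorem edgeField_apply (ψ : C(ℝ, ℝ)) (f : Linf V) (x : V) :
    G.edgeField ψ f x = G.avg x fun y ↦ ψ (f y - f x) := rfl

theorem lipschitzWith_edgeField {ψ : C(ℝ, ℝ)} {C : ℝ≥0} (hψ : LipschitzWith C ψ) :
    LipschitzWith (‖G.avgL‖₊ * (C * ‖(grad : Linf V →L[ℝ] _)‖₊)) (G.edgeField ψ) :=
  G.avgL.lipschitz.comp ((lipschitzWith_map hψ).comp grad.lipschitz)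

theorem isBounded_range_edgeField {ψ : C(ℝ, ℝ)} (hψ : Bornology.IsBounded (range ψ)) :
    Bornology.IsBounded (range (G.edgeField ψ)) :=
  (G.avgL.lipschitz.isBounded_image (isBounded_range_map hψ)).subset <|
    range_subset_iff.2 fun f ↦ mem_image_of_mem _ (mem_range_self (grad f))

/-- The edge nonlinearity `s ↦ s + s² / 2` of the modified heat equation, so that
`Δf + Γf = ∑_{y ∼ x} p x y * mheNonlinearity (f y - f x)`. -/
noncomputable def mheNonlinearity : C(ℝ, ℝ) where
  toFun s := s + s ^ 2 / 2

theorem lipschitzOnWith_mheNonlinearity (R : ℝ≥0) :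
    LipschitzOnWith (1 + R) mheNonlinearity (Icc (-R : ℝ) R) := by
  refine LipschitzOnWith.of_dist_le_mul fun s hs t ht ↦ ?_
  have hfactor : mheNonlinearity s - mheNonlinearity t = (1 + (s + t) / 2) * (s - t) := by
    simp only [mheNonlinearity, ContinuousMap.coe_mk]
    ring
  rw [Real.dist_eq, Real.dist_eq, hfactor, abs_mul, NNReal.coe_add, NNReal.coe_one]
  gcongr
  exact abs_le.2 ⟨by linarith [hs.1, ht.1], by linarith [hs.2, ht.2]⟩

/-- The right-hand side `Δf + Γf` of the modified heat equation, with increments along edges cut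
off at level `R`. -/
noncomputable def mheField (R : ℝ≥0) : Linf V → Linf V := G.edgeField (truncate R mheNonlinearity)

theorem mheField_apply {R : ℝ≥0} {f : Linf V} {x : V}
    (hf : ∀ y, 0 < G.p x y → |f y - f x| ≤ R) :
    G.mheField R f x = G.lap f x + G.gamma f x := by
  have hsplit : G.lap f x + G.gamma f x = G.avg x fun y ↦ mheNonlinearity (f y - f x) := by
    rw [lap_eq_avg, gamma_eq_avg, ← smul_eq_mul, ← map_smul, ← map_add]
    congr 1 with y
    simp only [Pi.add_apply, Pi.smul_apply, smul_eq_mul, mheNonlinearity, ContinuousMap.coe_mk]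
    ring
  rw [hsplit, mheField, edgeField_apply]
  exact avg_congr fun y hy ↦ truncate_of_abs_le (hf y hy)

theorem exists_lipschitzWith_mheField (R : ℝ≥0) : ∃ C, LipschitzWith C (G.mheField R) :=
  ⟨_, G.lipschitzWith_edgeField (lipschitzWith_truncate (lipschitzOnWith_mheNonlinearity R))⟩

theorem isBounded_range_mheField (R : ℝ≥0) : Bornology.IsBounded (range (G.mheField R)) :=
  G.isBounded_range_edgeField isBounded_range_truncate

variable {G}

theorem eventually_slope_norm_gammaL_lt {K t r : ℝ} (hCD : G.CDInfty K) {u : ℝ → Linf V}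
    (hu : HasDerivAt u (G.mheField 1 (u t)) t)
    (hosc : ∀ x y, 0 < G.p x y → |u t y - u t x| ≤ 1) (hr : -2 * K * ‖G.gammaL (u t) (u t)‖ < r) :
    ∀ᶠ z in 𝓝[>] t, slope (fun s ↦ ‖G.gammaL (u s) (u s)‖) t z < r := by
  set g := G.mheField 1 (u t)
  have hg : ⇑g = G.lap (u t) + G.gamma (u t) := funext fun x ↦ mheField_apply G (hosc x)
  have hτ : Tendsto (fun z ↦ z - t) (𝓝[>] t) (𝓝 0) :=
    tendsto_nhdsWithin_of_tendsto_nhds (tendsto_sub_nhds_zero_iff.2 tendsto_id)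
  have hτK : Tendsto (fun z ↦ (z - t) * (2 + 2 * K)) (𝓝[>] t) (𝓝 0) := by
    simpa using hτ.mul_const (2 + 2 * K)
  have hc : Tendsto (fun z ↦ -2 * K * ‖G.gammaL (u t) (u t)‖ + (z - t) * ‖G.gammaL g g‖) (𝓝[>] t)
      (𝓝 (-2 * K * ‖G.gammaL (u t) (u t)‖)) := by
    simpa using (hτ.mul_const ‖G.gammaL g g‖).const_add (-2 * K * ‖G.gammaL (u t) (u t)‖)
  refine eventually_slope_norm_lt (hasDerivAt_gammaL_self hu).hasDerivWithinAt hc ?_ hr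
  filter_upwards [self_mem_nhdsWithin, hτK.eventually_le_const one_pos] with z htz hz
  exact norm_gammaL_add_smul_le hCD hosc hg (sub_nonneg.2 (le_of_lt htz)) hz

theorem norm_gammaL_le_mul_exp {α K T : ℝ} (hell : ∀ x y, 0 < G.p x y → α ≤ G.p x y)
    (hK : 0 ≤ K) (hCD : G.CDInfty K) {u : ℝ → Linf V}
    (hu : ∀ t, HasDerivAt u (G.mheField 1 (u t)) t)
    (h0 : ‖G.gammaL (u 0) (u 0)‖ < α / 2) (hT : 0 ≤ T) :
    ‖G.gammaL (u T) (u T)‖ ≤ ‖G.gammaL (u 0) (u 0)‖ * Real.exp (-2 * K * T) := by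
  refine le_mul_exp_of_liminf_slope_right_le (φ := fun t ↦ ‖G.gammaL (u t) (u t)‖) hT
    (fun t _ ↦ (hasDerivAt_gammaL_self (hu t)).continuousAt.norm.continuousWithinAt)
    (by linarith) (norm_nonneg _) h0 fun t _ ht r hr ↦ ?_
  exact (eventually_slope_norm_gammaL_lt hCD (hu t)
    (fun x y ↦ abs_sub_le_one_of_norm_gammaL_le hell ht.le) hr).frequently

theorem exists_isMHESolution {α K : ℝ} (hell : ∀ x y, 0 < G.p x y → α ≤ G.p x y)
    (hK : 0 ≤ K) (hCD : G.CDInfty K) {u₀ : Linf V} (h0 : ‖G.gammaL u₀ u₀‖ < α / 2) :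
    ∃ u u' : ℝ → Linf V, IsMHESolution G u u' u₀ ∧
      ∀ t, 0 ≤ t → ‖G.gammaL (u t) (u t)‖ ≤ ‖G.gammaL u₀ u₀‖ * Real.exp (-2 * K * t) := by
  obtain ⟨C, hC⟩ := G.exists_lipschitzWith_mheField 1
  obtain ⟨u, rfl, hu⟩ := exists_forall_hasDerivAt_of_lipschitzWith_of_isBounded_range hC
    (G.isBounded_range_mheField 1) u₀
  have hdecay (t : ℝ) (ht : 0 ≤ t) := norm_gammaL_le_mul_exp hell hK hCD hu h0 ht
  have huc : Continuous u := continuous_iff_continuousAt.2 fun t ↦ (hu t).continuousAt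
  refine ⟨u, fun t ↦ G.mheField 1 (u t), ⟨rfl, huc.continuousOn,
    (hC.continuous.comp huc).continuousOn, fun t _ ↦ hu t, fun t ht x ↦ ?_⟩, hdecay⟩
  have hstay : ‖G.gammaL (u t) (u t)‖ ≤ α / 2 := calc
    _ ≤ ‖G.gammaL (u 0) (u 0)‖ * Real.exp (-2 * K * t) := hdecay t ht.le
    _ ≤ ‖G.gammaL (u 0) (u 0)‖ := mul_le_of_le_one_right (norm_nonneg _) <|
      Real.exp_le_one_iff.2 (mul_nonpos_of_nonpos_of_nonneg (by linarith) ht.le)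
    _ ≤ α / 2 := h0.le
  exact mheField_apply G fun y ↦ abs_sub_le_one_of_norm_gammaL_le hell hstay

end Flow

end WeightedGraph

namespace IsMHESolution

open Linf

variable {V : Type*} {G : WeightedGraph V} {u u' v v' : ℝ → Linf V} {u₀ : Linf V}

theorem hasDerivAt_mheField {R : ℝ≥0} {t : ℝ} (hu : IsMHESolution G u u' u₀) (ht : 0 < t)
    (hR : ‖grad (u t)‖ ≤ R) : HasDerivAt u (G.mheField R (u t)) t := by
  have hmhe : u' t = G.mheField R (u t) := by
    ext x
    rw [hu.eqn t ht x, G.mheField_apply fun y _ ↦ (abs_sub_le_norm_grad (u t) x y).trans hR]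
  exact hmhe ▸ hu.hasDeriv t ht

theorem exists_norm_grad_le (hu : IsMHESolution G u u' u₀) (T : ℝ) :
    ∃ R : ℝ, ∀ t ∈ Icc 0 T, ‖grad (u t)‖ ≤ R :=
  isCompact_Icc.exists_bound_of_continuousOn
    (grad.continuous.comp_continuousOn (hu.cont.mono Icc_subset_Ici_self))

theorem eqOn_Ici (hu : IsMHESolution G u u' u₀) (hv : IsMHESolution G v v' u₀) :
    EqOn u v (Ici 0) := by
  intro T hT
  obtain ⟨Ru, hRu⟩ := hu.exists_norm_grad_le T
  obtain ⟨Rv, hRv⟩ := hv.exists_norm_grad_le T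
  set R : ℝ≥0 := (max Ru Rv).toNNReal
  have hR : max Ru Rv ≤ R := Real.le_coe_toNNReal _
  obtain ⟨C, hC⟩ := G.exists_lipschitzWith_mheField R
  refine eqOn_Icc_of_forall_mem_Ioo_hasDerivAt hC
    (hu.cont.mono Icc_subset_Ici_self) (fun t ht ↦ hu.hasDerivAt_mheField ht.1 ?_)
    (hv.cont.mono Icc_subset_Ici_self) (fun t ht ↦ hv.hasDerivAt_mheField ht.1 ?_)
    (hu.init.trans hv.init.symm) ⟨hT, le_rfl⟩
  · exact (hRu t (Ioo_subset_Icc_self ht)).trans ((le_max_left _ _).trans hR)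
  · exact (hRv t (Ioo_subset_Icc_self ht)).trans ((le_max_right _ _).trans hR)

end IsMHESolution

theorem modified_heat_equation_global_solution_general {V : Type*} (G : WeightedGraph V) (α K : ℝ)
    (hell : ∀ x y, 0 < G.p x y → α ≤ G.p x y) (hK : 0 ≤ K) (hCD : G.CDInfty K) (u₀ : Linf V)
    (h0 : supNorm (G.gamma (fun x => u₀ x)) < α / 2) :
    (∃ u u' : ℝ → Linf V, IsMHESolution G u u' u₀ ∧
      ∀ t : ℝ, 0 ≤ t → supNorm (G.gamma (fun x => u t x)) ≤
        Real.exp (-2 * K * t) * supNorm (G.gamma (fun x => u₀ x))) ∧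
    (∀ u u' v v' : ℝ → Linf V, IsMHESolution G u u' u₀ → IsMHESolution G v v' u₀ →
      ∀ t : ℝ, 0 ≤ t → u t = v t) := by
  rw [G.supNorm_gamma] at h0
  obtain ⟨u, u', hu, hdecay⟩ := WeightedGraph.exists_isMHESolution hell hK hCD h0
  refine ⟨⟨u, u', hu, fun t ht ↦ ?_⟩, fun _ _ _ _ hu hv _ ht ↦ hu.eqOn_Ici hv ht⟩
  rw [G.supNorm_gamma, G.supNorm_gamma, mul_comm]
  exact hdecay t ht

/-- On a weighted graph with bounded geometry (constant `α > 0`)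
satisfying `CD(K,∞)` with `K ≥ 0`, for any `u₀ ∈ L^∞(V,μ)` with `‖Γ u₀‖_∞ < α/2`
there is a unique solution `u : [0,∞) → L^∞(V,μ)` of the modified heat equation
with initial data `u₀`, and it satisfies `‖Γ (u t)‖_∞ ≤ e^{-2Kt} ‖Γ u₀‖_∞`. -/
theorem modified_heat_equation_global_solution {V : Type*} [Countable V]
    (G : WeightedGraph V) (α K : ℝ) (hbg : G.BoundedGeometry α) (hK : 0 ≤ K)
    (hCD : G.CDInfty K) (u₀ : Linf V)
    (h0 : supNorm (G.gamma (fun x => u₀ x)) < α / 2) :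
    (∃ u u' : ℝ → Linf V, IsMHESolution G u u' u₀ ∧
      ∀ t : ℝ, 0 ≤ t → supNorm (G.gamma (fun x => u t x)) ≤
        Real.exp (-2 * K * t) * supNorm (G.gamma (fun x => u₀ x))) ∧
    (∀ u u' v v' : ℝ → Linf V, IsMHESolution G u u' u₀ → IsMHESolution G v v' u₀ →
      ∀ t : ℝ, 0 ≤ t → u t = v t) :=
  modified_heat_equation_global_solution_general G α K hbg.2.1 hK hCD u₀ h0
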